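/- Let C ∈ ℝ and let f : S¹ → ℝ satisfy: (A) f(x) + f(−x) = πC for all x ∈ S¹; and (B) f is Lipschitz continuous, left-differentiable at every point of S¹, and ‖∂₋f‖_TV(S¹) < ∞. Set h = f ∘ q. Then ∂₋h is left-continuous, and letting λ* be the Lebesgue–Stieltjes measure of ∂₋h on [−π, π), i.e., the unique signed Borel measure on [−π, π) with λ*([s, t)) = ∂₋h(t) − ∂₋h(s) for all −π ≤ s ≤ t < π, and λ = q_#λ*, one has for every t ∈ [0, π): ∫_{S¹} d_{S¹}(q(t), y) λ(dy) = 2·∫_{t−π}^{t} ∂₋h(s) ds = 4·f(q(t)) − 2πC. -/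

import Mathlib

open MeasureTheory Real Filter Set Complex
open scoped ENNReal NNReal Classical

noncomputable section

instance : MeasurableSpace Circle := borel Circle
instance : BorelSpace Circle := ⟨rfl⟩

namespace CirclePaper

/-- The spherical (arc-length) distance on the unit circle `S¹ ⊆ ℝ² ≃ ℂ`:
`d_{S¹}(x,y) = arccos ⟨x,y⟩ = arccos (Re (x * conj y))`. -/
def dS1 (x y : Circle) : ℝ := Real.arccos (((x : ℂ) * (starRingEnd ℂ) (y : ℂ)).re)

/-- The antipodal map `T x = -x` (multiplication by `exp(iπ) = -1`). -/
def antipode (x : Circle) : Circle := Circle.exp π * x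

/-- Integral of a function against a signed measure (via the Jordan decomposition). -/
def sInt (l : SignedMeasure Circle) (f : Circle → ℝ) : ℝ :=
  (∫ y, f y ∂l.toJordanDecomposition.posPart) - (∫ y, f y ∂l.toJordanDecomposition.negPart)

/-- `f_λ(x) = ∫_{S¹} d_{S¹}(x,y) λ(dy)`. -/
def fRep (l : SignedMeasure Circle) (x : Circle) : ℝ := sInt l (fun y => dS1 x y)

/-- `f : S¹ → ℝ` has left derivative `L` at `x` w.r.t. the covering `q(t) = exp(it)`,
i.e. `(f(x +_q t) - f(x))/t → L` as `t → 0⁻`. -/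
def HasLeftDerivCircleAt (f : Circle → ℝ) (L : ℝ) (x : Circle) : Prop :=
  Filter.Tendsto (fun t : ℝ => (f (Circle.exp t * x) - f x) / t)
    (nhdsWithin 0 (Set.Iio 0)) (nhds L)

/-- `h : ℝ → ℝ` has left derivative `L` at `t`: `(h(t+s) - h(t))/s → L` as `s → 0⁻`. -/
def HasLeftDerivAtR (h : ℝ → ℝ) (L : ℝ) (t : ℝ) : Prop :=
  Filter.Tendsto (fun s : ℝ => (h (t + s) - h t) / s)
    (nhdsWithin 0 (Set.Iio 0)) (nhds L)

/-- The total variation `‖g‖_{TV(S¹)}` of `g : S¹ → ℝ`: the supremum of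
`Σ |g(q(t_i)) - g(q(t_{i+1}))|` over partitions `0 = t_0 ≤ … ≤ t_{n+1} = 2π`. -/
def circleTV (g : Circle → ℝ) : ℝ≥0∞ := eVariationOn (g ∘ Circle.exp) (Set.Icc 0 (2 * π))

/-- `f` is Lipschitz continuous with respect to the spherical distance. -/
def LipschitzCircle (f : Circle → ℝ) : Prop := ∃ K : ℝ, ∀ x y, |f x - f y| ≤ K * dS1 x y

/-- The normalized Hausdorff 1-measure on `S¹`, i.e. the rotation-invariant Borel
probability measure (the pushforward of normalized Lebesgue measure on `[0, 2π)`). -/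
def hausOne : Measure Circle :=
  (ENNReal.ofReal (2 * π))⁻¹ • Measure.map Circle.exp (volume.restrict (Set.Ico 0 (2 * π)))

instance : IsFiniteMeasure hausOne := by
  constructor
  have h1 : (Measure.map Circle.exp (volume.restrict (Set.Ico 0 (2 * π)))) Set.univ
      = volume (Set.Ico 0 (2 * π)) := by
    rw [Measure.map_apply Circle.exp.continuous.measurable MeasurableSet.univ]
    simp
  simp only [hausOne, Measure.smul_apply, smul_eq_mul, h1, Real.volume_Ico]
  refine ENNReal.mul_lt_top ?_ ?_
  · exact ENNReal.inv_lt_top.mpr (ENNReal.ofReal_pos.mpr (by positivity))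
  · exact ENNReal.ofReal_lt_top

/-- The half-open arc `[x, T(x)) = {x +_q t : t ∈ [0, π)}` of length `π` starting at `x`. -/
def halfArc (x : Circle) : Set Circle := (fun t : ℝ => Circle.exp t * x) '' Set.Ico 0 π

/-- A Borel measure on the circle, regarded as a signed measure
(defined to be `0` if the measure is not finite). -/
def msigned (μ : Measure Circle) : SignedMeasure Circle :=
  if h : IsFiniteMeasure μ then @Measure.toSignedMeasure _ _ μ h else 0

/-!
For `t ∈ [0, π]`, on `[-π, π]` the function `y ↦ dS1 (q t) (q y)` has slope `-1` on the
half-circle `(t - π, t]` and slope `1` elsewhere. Integrating it against the Stieltjes measure of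
`∂₋h` by parts (Fubini on a triangle), the boundary terms cancel because `∂₋h` is `2π`-periodic,
and what remains is twice the integral of `∂₋h` over `(t - π, t]` minus its integral over a full
turn. The fundamental theorem of calculus for left derivatives turns the former into
`2 (f x - f (-x))`, with `x = q t`, and the latter into `0`; hypothesis (A) finishes. The points
with `t ∉ [0, π]` follow from `dS1 (-x) y = π - dS1 x y`, because `λ` has total mass `0`.

Left-continuity comes from the measure: countable additivity gives `∂₋h` a left limit everywhere,
and a left derivative that has a left limit agrees with it.
-/

open scoped Topology

section LeftDerivative

lemma hasLeftDerivAtR_iff_hasDerivWithinAt {h : ℝ → ℝ} {L t : ℝ} :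
    HasLeftDerivAtR h L t ↔ HasDerivWithinAt h L (Iio t) t := by
  rw [hasDerivWithinAt_iff_tendsto_slope' self_notMem_Iio, HasLeftDerivAtR,
    ← add_zero t, ← map_add_left_nhdsLT, tendsto_map'_iff]
  simp only [add_zero, Function.comp_def, slope_def_field, add_sub_cancel_left]

lemma HasLeftDerivAtR.unique {h : ℝ → ℝ} {L M t : ℝ}
    (hL : HasLeftDerivAtR h L t) (hM : HasLeftDerivAtR h M t) : L = M :=
  tendsto_nhds_unique hL hM

lemma HasLeftDerivAtR.periodic {h h' : ℝ → ℝ} {c : ℝ} (hper : Function.Periodic h c)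
    (hderiv : ∀ t, HasLeftDerivAtR h (h' t) t) : Function.Periodic h' c := fun t => by
  refine (hderiv (t + c)).unique ?_
  simpa only [HasLeftDerivAtR, add_right_comm t c, hper _] using hderiv t

variable {E : Type*} [NormedAddCommGroup E] [NormedSpace ℝ E] [CompleteSpace E]
  {h h' : ℝ → E} {a b : ℝ}

lemma integral_eq_sub_of_hasDerivWithinAt_Iio (hcont : ContinuousOn h (uIcc a b))
    (hderiv : ∀ x ∈ Ioo (min a b) (max a b), HasDerivWithinAt h (h' x) (Iio x) x)
    (hint : IntervalIntegrable h' volume a b) : ∫ x in a..b, h' x = h b - h a := by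
  have hneg : ∀ x ∈ Ioo (min (-b) (-a)) (max (-b) (-a)), -x ∈ Ioo (min a b) (max a b) := by
    intro x hx
    rw [min_neg_neg, max_neg_neg, max_comm, min_comm] at hx
    exact ⟨lt_neg.2 hx.2, neg_lt.2 hx.1⟩
  have reflected : ∫ x in -b..-a, h' (-x) = -h (- -a) - -h (- -b) := by
    refine intervalIntegral.integral_eq_sub_of_hasDeriv_right (f := fun x => -h (-x)) ?_ ?_ ?_
    · refine (hcont.comp continuousOn_neg fun x hx => ?_).neg
      rwa [← Set.mem_neg, Set.neg_uIcc, uIcc_comm]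
    · intro x hx
      have := (hderiv (-x) (hneg x hx)).scomp x (hasDerivAt_neg x).hasDerivWithinAt
        (s := Ioi x) fun y hy => neg_lt_neg (mem_Ioi.1 hy)
      simpa [Function.comp_def] using this.fun_neg
    · simpa using (hint.comp_sub_left 0).symm
  simpa [intervalIntegral.integral_comp_neg, neg_add_eq_sub] using reflected

lemma nhdsLE_inf_ae_le_nhdsLT (x : ℝ) : 𝓝[≤] x ⊓ ae volume ≤ 𝓝[<] x := by
  have ne_ae : ae (volume : Measure ℝ) ≤ 𝓟 {x}ᶜ := le_principal_iff.2 (compl_mem_ae_iff.2 (by simp))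
  calc 𝓝[≤] x ⊓ ae volume ≤ 𝓝[≤] x ⊓ 𝓟 {x}ᶜ := inf_le_inf_left _ ne_ae
    _ = 𝓝[<] x := by rw [nhdsWithin, inf_assoc, inf_principal, ← sdiff_eq, Iic_sdiff_right]; rfl

lemma eq_of_hasDerivWithinAt_Iio_of_tendsto {L : E} (hab : a < b)
    (hcont : ContinuousOn h (Icc a b))
    (hderiv : ∀ x ∈ Ioc a b, HasDerivWithinAt h (h' x) (Iio x) x)
    (hint : IntervalIntegrable h' volume a b) (hlim : Tendsto h' (𝓝[<] b) (𝓝 L)) : h' b = L := by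
  have hprim : HasDerivWithinAt (fun u => ∫ x in a..u, h' x) L (Iic b) b :=
    intervalIntegral.integral_hasDerivWithinAt_of_tendsto_ae_right hint
      ⟨Ioc a b, Ioc_mem_nhdsLE hab, hint.1.aestronglyMeasurable⟩
      (hlim.mono_left (nhdsLE_inf_ae_le_nhdsLT b))
  have hFTC : ∀ u ∈ Icc a b, ∫ x in a..u, h' x = h u - h a := fun u ⟨hau, hub⟩ => by
    refine integral_eq_sub_of_hasDerivWithinAt_Iio ?_ ?_ (hint.mono_set ?_)
    · rw [uIcc_of_le hau]
      exact hcont.mono (Icc_subset_Icc_right hub)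
    · rw [min_eq_left hau, max_eq_right hau]
      exact fun x hx => hderiv x ⟨hx.1, hx.2.le.trans hub⟩
    · rw [uIcc_of_le hau, uIcc_of_le hab.le]
      exact Icc_subset_Icc_right hub
  have hsub : HasDerivWithinAt (fun u => h u - h a) L (Iio b) b := by
    refine (hprim.mono Iio_subset_Iic_self).congr_of_eventuallyEq ?_
      (hFTC b (right_mem_Icc.2 hab.le)).symm
    filter_upwards [Ioo_mem_nhdsLT hab] with u hu
    exact (hFTC u (Ioo_subset_Icc_self hu)).symm
  exact (uniqueDiffWithinAt_Iio b).eq_deriv _ (hderiv b (right_mem_Ioc.2 hab))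
    ((hasDerivWithinAt_sub_const_iff _).1 hsub)

end LeftDerivative

lemma continuousWithinAt_Iio_of_periodic {α : Type*} [TopologicalSpace α] {g : ℝ → α} {a c : ℝ}
    (hper : Function.Periodic g c) (hc : 0 < c)
    (hg : ∀ t ∈ Ioc a (a + c), ContinuousWithinAt g (Iio t) t) (t : ℝ) :
    ContinuousWithinAt g (Iio t) t := by
  obtain ⟨n, hn, -⟩ := existsUnique_add_zsmul_mem_Ioc hc t a
  have shifted := hg _ hn
  rw [ContinuousWithinAt, ← map_add_right_nhdsLT, tendsto_map'_iff] at shifted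
  simpa only [ContinuousWithinAt, Function.comp_def, hper.zsmul n _] using shifted

section VectorMeasure

instance {X : Type*} [MeasurableSpace X] (v : SignedMeasure X) : IsFiniteMeasure v.variation := by
  rw [← SignedMeasure.totalVariation_eq_variation, SignedMeasure.totalVariation]
  infer_instance

variable {F : Type*} [NormedAddCommGroup F] [NormedSpace ℝ F]

lemma intervalIntegrable_vectorMeasure_Ico (v : VectorMeasure ℝ F) (c a b : ℝ) :
    IntervalIntegrable (fun t => v (Ico c t)) volume a b := by
  have hset : MeasurableSet {p : ℝ × ℝ | c ≤ p.2 ∧ p.2 < p.1} := by measurability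
  have hmeas : StronglyMeasurable fun t => v (Ico c t) :=
    VectorMeasure.stronglyMeasurable_vectorMeasure_prodMk_left hset
  exact (intervalIntegrable_const (c := (v.bound : ℝ))).mono_fun' hmeas.aestronglyMeasurable
    (Eventually.of_forall fun _ => VectorMeasure.norm_apply_le_bound)

lemma tendsto_vectorMeasure_Ico_nhdsLT [CompleteSpace F] {α : Type*} [LinearOrder α]
    [TopologicalSpace α] [OrderTopology α] [FirstCountableTopology α] [MeasurableSpace α]
    [OpensMeasurableSpace α] (v : VectorMeasure α F) [IsFiniteMeasure v.variation] (s t : α) :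
    Tendsto (fun u => v (Ico s u)) (𝓝[<] t) (𝓝 (v (Ico s t))) := by
  have apply_eq (u : α) : v (Ico s u) = ∫ᵛ x, (Ico s u).indicator (fun _ => (1 : ℝ)) x ∂•v := by
    rw [VectorMeasure.integral_indicator_const _ measurableSet_Ico]
    simp
  simp only [apply_eq]
  refine VectorMeasure.tendsto_integral_filter_of_dominated_convergence (fun _ => 1) ?_ ?_
    (integrable_const _) ?_
  · exact Eventually.of_forall fun u =>
      (stronglyMeasurable_const.indicator measurableSet_Ico).aestronglyMeasurable
  · exact Eventually.of_forall fun u => Eventually.of_forall fun x =>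
      (norm_indicator_le_norm_self _ _).trans (by simp)
  · refine Eventually.of_forall fun x => ?_
    rw [tendsto_indicator_const_apply_iff_eventually]
    rcases lt_or_ge x t with hxt | htx
    · filter_upwards [Ioo_mem_nhdsLT hxt] with u hu
      simp [hu.1, hxt]
    · filter_upwards [self_mem_nhdsWithin] with u hu
      simp [htx.not_gt, (hu.le.trans htx).not_gt]

lemma integral_signedMeasure_eq_sub {α : Type*} [MeasurableSpace α] {v : SignedMeasure α}
    {f : α → F} (hf : v.Integrable f) :
    ∫ᵛ x, f x ∂<•v =
      ∫ x, f x ∂v.toJordanDecomposition.posPart - ∫ x, f x ∂v.toJordanDecomposition.negPart := by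
  have hle : v.toJordanDecomposition.posPart ≤ v.variation ∧
      v.toJordanDecomposition.negPart ≤ v.variation := by
    rw [← SignedMeasure.totalVariation_eq_variation]
    exact ⟨Measure.le_add_right le_rfl, Measure.le_add_left le_rfl⟩
  conv_lhs => rw [← SignedMeasure.toSignedMeasure_toJordanDecomposition v]
  rw [JordanDecomposition.toSignedMeasure, VectorMeasure.integral_sub_vectorMeasure,
    VectorMeasure.integral_toSignedMeasure, VectorMeasure.integral_toSignedMeasure]
  all_goals rw [VectorMeasure.Integrable, Measure.variation_toSignedMeasure]
  exacts [hf.mono_measure hle.1, hf.mono_measure hle.2]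

lemma sInt_eq_integral {l : SignedMeasure Circle} {f : Circle → ℝ} (hf : l.Integrable f) :
    sInt l f = ∫ᵛ y, f y ∂<•l :=
  (integral_signedMeasure_eq_sub hf).symm

end VectorMeasure

section Primitive

variable {E : Type*} [NormedAddCommGroup E] [NormedSpace ℝ E]
  {ψ : ℝ → E} {a b : ℝ}

lemma integrableOn_Ico_primitive (μ : Measure ℝ) [IsLocallyFiniteMeasure μ] (hab : a ≤ b)
    (hψ : IntervalIntegrable ψ volume a b) :
    IntegrableOn (fun y => ∫ s in a..y, ψ s) (Ico a b) μ := by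
  have hcont := intervalIntegral.continuousOn_primitive_interval' hψ left_mem_uIcc
  rw [uIcc_of_le hab] at hcont
  exact hcont.integrableOn_Icc.mono_set Ico_subset_Icc_self

lemma intervalIntegrable_signedMeasure_Ico_smul (v : SignedMeasure ℝ) (c : ℝ)
    (hψ : IntervalIntegrable ψ volume a b) :
    IntervalIntegrable (fun s => v (Ico s c) • ψ s) volume a b := by
  have hset : MeasurableSet {p : ℝ × ℝ | p.1 ≤ p.2 ∧ p.2 < c} := by measurability
  have hmeas : StronglyMeasurable fun s => v (Ico s c) :=
    VectorMeasure.stronglyMeasurable_vectorMeasure_prodMk_left hset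
  rw [intervalIntegrable_iff] at hψ ⊢
  exact hψ.bdd_smul v.bound hmeas.aestronglyMeasurable
    (Eventually.of_forall fun _ => VectorMeasure.norm_apply_le_bound)

lemma intervalIntegrable_measureReal_Ico_smul (μ : Measure ℝ) [IsFiniteMeasure μ] (c : ℝ)
    (hψ : IntervalIntegrable ψ volume a b) :
    IntervalIntegrable (fun s => μ.real (Ico s c) • ψ s) volume a b := by
  simpa only [Measure.toSignedMeasure_apply_measurable measurableSet_Ico] using
    intervalIntegrable_signedMeasure_Ico_smul μ.toSignedMeasure c hψ

variable [CompleteSpace E]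

lemma setIntegral_Ico_primitive (μ : Measure ℝ) [IsFiniteMeasure μ] (hab : a ≤ b)
    (hψ : IntervalIntegrable ψ volume a b) :
    ∫ y in Ico a b, (∫ s in a..y, ψ s) ∂μ = ∫ s in a..b, μ.real (Ico s b) • ψ s := by
  let triangle : Set (ℝ × ℝ) := {p | p.2 ≤ p.1}
  have hint : Integrable (Function.uncurry fun y s => triangle.indicator (fun p => ψ p.2) (y, s))
      ((μ.restrict (Ico a b)).prod (volume.restrict (Ioc a b))) :=
    (hψ.1.comp_snd _).indicator (measurableSet_le measurable_snd measurable_fst)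
  calc ∫ y in Ico a b, (∫ s in a..y, ψ s) ∂μ
      = ∫ y in Ico a b, (∫ s in Ioc a b, triangle.indicator (fun p => ψ p.2) (y, s)) ∂μ := by
        refine setIntegral_congr_fun measurableSet_Ico fun y hy => ?_
        have slice : (fun s => triangle.indicator (fun p => ψ p.2) (y, s)) = (Iic y).indicator ψ :=
          rfl
        simp only [slice]
        rw [setIntegral_indicator measurableSet_Iic, Ioc_inter_Iic, min_eq_right hy.2.le,
          intervalIntegral.integral_of_le hy.1]
    _ = ∫ s in Ioc a b, ∫ y in Ico a b, triangle.indicator (fun p => ψ p.2) (y, s) ∂μ :=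
        integral_integral_swap hint
    _ = ∫ s in a..b, μ.real (Ico s b) • ψ s := by
        rw [intervalIntegral.integral_of_le hab]
        refine setIntegral_congr_fun measurableSet_Ioc fun s hs => ?_
        have slice : (fun y => triangle.indicator (fun p => ψ p.2) (y, s)) =
            (Ici s).indicator fun _ => ψ s := rfl
        simp only [slice]
        rw [integral_indicator_const _ measurableSet_Ici,
          measureReal_restrict_apply measurableSet_Ici, inter_comm, Ico_inter_Ici,
          max_eq_right hs.1.le]

lemma setIntegral_Ico_primitive_signedMeasure (v : SignedMeasure ℝ) (hab : a ≤ b)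
    (hψ : IntervalIntegrable ψ volume a b) :
    ∫ᵛ y in Ico a b, (∫ s in a..y, ψ s) ∂<•v = ∫ s in a..b, v (Ico s b) • ψ s := by
  have hint : v.Integrable ((Ico a b).indicator fun y => ∫ s in a..y, ψ s) :=
    (integrableOn_Ico_primitive v.variation hab hψ).integrable_indicator measurableSet_Ico
  rw [← VectorMeasure.integral_indicator measurableSet_Ico, integral_signedMeasure_eq_sub hint,
    integral_indicator measurableSet_Ico, integral_indicator measurableSet_Ico,
    setIntegral_Ico_primitive _ hab hψ, setIntegral_Ico_primitive _ hab hψ,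
    ← intervalIntegral.integral_sub (intervalIntegrable_measureReal_Ico_smul _ _ hψ)
      (intervalIntegrable_measureReal_Ico_smul _ _ hψ)]
  simp only [← sub_smul, v.apply_eq_posPart_real_sub_negPart_real measurableSet_Ico]

end Primitive

/-- `v` is the Lebesgue–Stieltjes measure of `g` on the left-closed, right-open intervals with
endpoints in `I`. -/
def IsStieltjesOn (v : SignedMeasure ℝ) (g : ℝ → ℝ) (I : Set ℝ) : Prop :=
  ∀ s ∈ I, ∀ t ∈ I, s ≤ t → v (Ico s t) = g t - g s

section IsStieltjesOn

variable {v : SignedMeasure ℝ} {g : ℝ → ℝ} {a b : ℝ}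

lemma IsStieltjesOn.mono {I J : Set ℝ} (hv : IsStieltjesOn v g J) (hIJ : I ⊆ J) :
    IsStieltjesOn v g I :=
  fun s hs t ht => hv s (hIJ hs) t (hIJ ht)

lemma IsStieltjesOn.intervalIntegrable (hv : IsStieltjesOn v g (Ico a b)) (hab : a ≤ b) :
    IntervalIntegrable g volume a b := by
  rw [intervalIntegrable_iff_integrableOn_Ico_of_le hab]
  refine IntegrableOn.congr_fun (f := fun s => g a + v (Ico a s)) ?_ (fun s hs => ?_)
    measurableSet_Ico
  · rw [← intervalIntegrable_iff_integrableOn_Ico_of_le hab]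
    exact intervalIntegrable_const.add (intervalIntegrable_vectorMeasure_Ico v a a b)
  · simp only [hv a (left_mem_Ico.2 (hs.1.trans_lt hs.2)) s hs hs.1, add_sub_cancel]

lemma IsStieltjesOn.tendsto_nhdsLT (hv : IsStieltjesOn v g (Ico a b)) {s t : ℝ} (has : a ≤ s)
    (hst : s < t) (htb : t ≤ b) : Tendsto g (𝓝[<] t) (𝓝 (g s + v (Ico s t))) := by
  refine ((tendsto_vectorMeasure_Ico_nhdsLT v s t).const_add (g s)).congr' ?_
  filter_upwards [Ioo_mem_nhdsLT hst] with u ⟨hsu, hut⟩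
  rw [hv s ⟨has, hst.trans_le htb⟩ u ⟨has.trans hsu.le, hut.trans_le htb⟩ hsu.le, add_sub_cancel]

lemma IsStieltjesOn.continuousWithinAt_Iio (hv : IsStieltjesOn v g (Icc a b)) {t : ℝ}
    (ht : t ∈ Ioc a b) : ContinuousWithinAt g (Iio t) t := by
  have hlim := (hv.mono Ico_subset_Icc_self).tendsto_nhdsLT le_rfl ht.1 ht.2
  rwa [hv a (left_mem_Icc.2 (ht.1.le.trans ht.2)) t (Ioc_subset_Icc_self ht) ht.1.le,
    add_sub_cancel] at hlim

-- A left derivative equals its own left limit, which the measure prescribes at the endpoint `b`.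
theorem IsStieltjesOn.Icc_of_hasDerivWithinAt {h : ℝ → ℝ} (hv : IsStieltjesOn v g (Ico a b))
    (hcont : ContinuousOn h (Icc a b))
    (hderiv : ∀ t ∈ Ioc a b, HasDerivWithinAt h (g t) (Iio t) t) :
    IsStieltjesOn v g (Icc a b) := by
  intro s hs t ht hst
  rcases hst.eq_or_lt with rfl | hst
  · simp
  have hlim := hv.tendsto_nhdsLT hs.1 hst ht.2
  have hint : IntervalIntegrable g volume s t :=
    (hv.mono (Ico_subset_Ico hs.1 ht.2)).intervalIntegrable hst.le
  rw [eq_of_hasDerivWithinAt_Iio_of_tendsto hst (hcont.mono (Icc_subset_Icc hs.1 ht.2))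
    (fun x hx => hderiv x ⟨hs.1.trans_lt hx.1, hx.2.trans ht.2⟩) hint hlim, add_sub_cancel_left]

theorem IsStieltjesOn.setIntegral_Ico_by_parts {E : Type*} [NormedAddCommGroup E] [NormedSpace ℝ E]
    [CompleteSpace E] {φ ψ : ℝ → E}
    (hv : IsStieltjesOn v g (Icc a b)) (hab : a ≤ b) (hψ : IntervalIntegrable ψ volume a b)
    (hφ : ∀ y ∈ Icc a b, φ y = φ a + ∫ s in a..y, ψ s) :
    ∫ᵛ y in Ico a b, φ y ∂<•v = g b • φ b - g a • φ a - ∫ s in a..b, g s • ψ s := by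
  have ha : a ∈ Icc a b := left_mem_Icc.2 hab
  have hb : b ∈ Icc a b := right_mem_Icc.2 hab
  have hgψ : ∫ s in a..b, g s • ψ s =
      g b • (∫ s in a..b, ψ s) - ∫ s in a..b, v (Ico s b) • ψ s := by
    rw [← intervalIntegral.integral_smul,
      ← intervalIntegral.integral_sub (hψ.continuousOn_smul continuousOn_const)
        (intervalIntegrable_signedMeasure_Ico_smul v b hψ)]
    refine intervalIntegral.integral_congr fun s hs => ?_
    rw [uIcc_of_le hab] at hs
    simp only [hv s hs b hb hs.2, sub_smul, sub_sub_cancel]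
  have hprim : v.IntegrableOn (fun y => ∫ s in a..y, ψ s) (Ico a b) := by
    rw [VectorMeasure.IntegrableOn, VectorMeasure.Integrable,
      VectorMeasure.variation_restrict measurableSet_Ico]
    exact integrableOn_Ico_primitive v.variation hab hψ
  calc ∫ᵛ y in Ico a b, φ y ∂<•v = ∫ᵛ y in Ico a b, (φ a + ∫ s in a..y, ψ s) ∂<•v :=
        VectorMeasure.setIntegral_congr_fun fun y hy => hφ y (Ico_subset_Icc_self hy)
    _ = v (Ico a b) • φ a + ∫ s in a..b, v (Ico s b) • ψ s := by
        rw [VectorMeasure.integral_fun_add (integrable_const _) hprim,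
          VectorMeasure.setIntegral_const,
          setIntegral_Ico_primitive_signedMeasure v hab hψ]
        simp
    _ = g b • φ b - g a • φ a - ∫ s in a..b, g s • ψ s := by
        rw [hgψ, hφ b hb, hv a ha b hb hab]
        module

end IsStieltjesOn

section Circle

@[fun_prop]
lemma continuous_dS1 {X : Type*} [TopologicalSpace X] {f g : X → Circle} (hf : Continuous f)
    (hg : Continuous g) : Continuous fun x => dS1 (f x) (g x) := by
  unfold dS1
  fun_prop

lemma dS1_self (x : Circle) : dS1 x x = 0 := by
  simp [dS1, Complex.mul_conj]

lemma LipschitzCircle.continuous {f : Circle → ℝ} (hf : LipschitzCircle f) : Continuous f := by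
  obtain ⟨K, hK⟩ := hf
  refine continuous_iff_continuousAt.2 fun x => tendsto_iff_dist_tendsto_zero.2 ?_
  have hdist : Tendsto (fun y => K * dS1 y x) (𝓝 x) (𝓝 0) := by
    have hcont : Continuous fun y => K * dS1 y x := by fun_prop
    simpa only [dS1_self, mul_zero] using hcont.tendsto x
  exact squeeze_zero (fun _ => dist_nonneg)
    (fun y => (Real.dist_eq _ _).trans_le (hK y x)) hdist

lemma dS1_exp_exp (s t : ℝ) :
    dS1 (Circle.exp s) (Circle.exp t) = arccos (cos (s - t)) := by
  simp [dS1, Circle.coe_exp, exp_ofReal_mul_I_re, exp_ofReal_mul_I_im, Real.cos_sub]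

lemma dS1_exp_exp_of_abs_sub_le {s t : ℝ} (hst : |s - t| ≤ π) :
    dS1 (Circle.exp s) (Circle.exp t) = |s - t| := by
  rw [dS1_exp_exp, ← Real.cos_abs, arccos_cos (abs_nonneg _) hst]

lemma dS1_exp_exp_of_pi_le_sub {s t : ℝ} (hπ : π ≤ s - t) (h2π : s - t ≤ 2 * π) :
    dS1 (Circle.exp s) (Circle.exp t) = 2 * π - (s - t) := by
  rw [dS1_exp_exp, ← Real.cos_two_pi_sub, arccos_cos (by linarith) (by linarith)]

lemma antipode_antipode (x : Circle) : antipode (antipode x) = x := by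
  rw [antipode, antipode, ← mul_assoc, ← Circle.exp_add, ← two_mul, Circle.exp_two_pi, one_mul]

lemma exp_pi_eq_exp_neg_pi : Circle.exp π = Circle.exp (-π) := by
  rw [← Circle.periodic_exp (-π)]
  ring_nf

lemma exp_sub_pi (t : ℝ) : Circle.exp (t - π) = antipode (Circle.exp t) := by
  rw [← Circle.periodic_exp, antipode, ← Circle.exp_add]
  ring_nf

lemma exists_exp_eq_or_antipode_exp_eq (x : Circle) :
    ∃ t ∈ Icc 0 π, Circle.exp t = x ∨ antipode (Circle.exp t) = x := by
  rcases le_total 0 (arg x) with harg | harg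
  · exact ⟨arg x, ⟨harg, arg_le_pi x⟩, Or.inl (Circle.exp_arg x)⟩
  · refine ⟨arg x + π, ⟨by linarith [neg_pi_lt_arg x], by linarith⟩, Or.inr ?_⟩
    rw [← exp_sub_pi, add_sub_cancel_right, Circle.exp_arg]

lemma dS1_antipode (x y : Circle) : dS1 (antipode x) y = π - dS1 x y := by
  simp [dS1, antipode, Circle.coe_exp, ← arccos_neg]

lemma integrable_dS1 (l : SignedMeasure Circle) (x : Circle) : l.Integrable fun y => dS1 x y :=
  Continuous.integrable_of_hasCompactSupport (by fun_prop) (HasCompactSupport.of_compactSpace _)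

lemma fRep_antipode {l : SignedMeasure Circle} (hl : l univ = 0) (x : Circle) :
    fRep l (antipode x) = -fRep l x := by
  rw [fRep, fRep, sInt_eq_integral (integrable_dS1 l _), sInt_eq_integral (integrable_dS1 l _)]
  simp only [dS1_antipode]
  rw [VectorMeasure.integral_fun_sub (integrable_const _) (integrable_dS1 l x),
    VectorMeasure.integral_const, hl, map_zero, zero_sub]

end Circle

section HalfCircle

lemma integral_indicator_Ioc {E : Type*} [NormedAddCommGroup E] [NormedSpace ℝ E] (f : ℝ → E)
    {a b : ℝ} (hab : a ≤ b) (c d : ℝ) :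
    ∫ s in a..b, (Ioc c d).indicator f s = ∫ s in Ioc (max a c) (min b d), f s := by
  rw [intervalIntegral.integral_of_le hab, setIntegral_indicator measurableSet_Ioc, Ioc_inter_Ioc]

lemma intervalIntegrable_indicator {E : Type*} [NormedAddCommGroup E] {f : ℝ → E} {a b : ℝ}
    {s : Set ℝ} (hf : IntervalIntegrable f volume a b) (hs : MeasurableSet s) :
    IntervalIntegrable (s.indicator f) volume a b :=
  ⟨hf.1.indicator hs, hf.2.indicator hs⟩

/-- The arc-length derivative of `y ↦ dS1 (exp t) (exp y)` on `[-π, π]` for `t ∈ [0, π]`: it is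
`-1` on the half-circle `(t - π, t]` ending at `t`, where `y` moves towards `t`, and `1`
elsewhere. -/
def dS1Slope (t y : ℝ) : ℝ := 1 - (Ioc (t - π) t).indicator (fun _ => 2) y

lemma intervalIntegrable_dS1Slope (t a b : ℝ) : IntervalIntegrable (dS1Slope t) volume a b :=
  intervalIntegrable_const.sub (intervalIntegrable_indicator intervalIntegrable_const
    measurableSet_Ioc)

lemma integral_dS1Slope {t y : ℝ} (ht : 0 ≤ t) (hy : -π ≤ y) :
    ∫ s in -π..y, dS1Slope t s = y + π - 2 * max (min y t - (t - π)) 0 := by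
  unfold dS1Slope
  rw [intervalIntegral.integral_sub intervalIntegrable_const (intervalIntegrable_indicator
    intervalIntegrable_const measurableSet_Ioc), integral_indicator_Ioc _ hy,
    max_eq_right (by linarith)]
  simp [Measure.real, ENNReal.toReal_ofReal', mul_comm]

lemma dS1_exp_exp_eq_add_integral {t y : ℝ} (ht : t ∈ Icc 0 π) (hy : y ∈ Icc (-π) π) :
    dS1 (Circle.exp t) (Circle.exp y) =
      dS1 (Circle.exp t) (Circle.exp (-π)) + ∫ s in -π..y, dS1Slope t s := by
  obtain ⟨h0t, htπ⟩ := ht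
  obtain ⟨hπy, hyπ⟩ := hy
  rw [integral_dS1Slope h0t hπy, dS1_exp_exp_of_pi_le_sub (t := -π) (by linarith) (by linarith)]
  rcases le_total y (t - π) with hyt | hyt
  · rw [dS1_exp_exp_of_pi_le_sub (by linarith) (by linarith), max_eq_right (by grind)]
    ring
  · rw [dS1_exp_exp_of_abs_sub_le (by grind)]
    grind

lemma integral_smul_dS1Slope {g : ℝ → ℝ} {t : ℝ} (ht : t ∈ Icc 0 π)
    (hg : IntervalIntegrable g volume (-π) π) :
    ∫ s in -π..π, g s • dS1Slope t s = (∫ s in -π..π, g s) - 2 * ∫ s in (t - π)..t, g s := by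
  have hmul (s : ℝ) :
      g s • dS1Slope t s = g s - (Ioc (t - π) t).indicator (fun s => 2 * g s) s := by
    by_cases hs : s ∈ Ioc (t - π) t
    · simp only [dS1Slope, hs, indicator_of_mem, smul_eq_mul]
      ring
    · simp [dS1Slope, hs]
  simp only [hmul]
  rw [intervalIntegral.integral_sub hg
      (intervalIntegrable_indicator (hg.const_mul 2) measurableSet_Ioc),
    integral_indicator_Ioc _ (by linarith [pi_pos]), max_eq_right (by linarith [ht.1]),
    min_eq_right ht.2, ← intervalIntegral.integral_of_le (by linarith [pi_pos]),
    intervalIntegral.integral_const_mul]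

theorem fRep_map_exp {v : SignedMeasure ℝ} {g : ℝ → ℝ} {t : ℝ}
    (hv : IsStieltjesOn v g (Icc (-π) π)) (hg : g π = g (-π)) (ht : t ∈ Icc 0 π) :
    fRep ((v.restrict (Ico (-π) π)).map Circle.exp) (Circle.exp t) =
      2 * (∫ s in (t - π)..t, g s) - ∫ s in -π..π, g s := by
  have hcont : Continuous fun y => dS1 (Circle.exp t) y := by fun_prop
  have hπ : -π ≤ π := by linarith [pi_pos]
  have hint : (v.restrict (Ico (-π) π)).Integrable fun y =>
      dS1 (Circle.exp t) (Circle.exp y) :=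
    Integrable.of_bound (by fun_prop) π (Eventually.of_forall fun y => by
      simpa [dS1, abs_of_nonneg (arccos_nonneg _)] using arccos_le_pi _)
  have byParts := hv.setIntegral_Ico_by_parts (φ := fun y => dS1 (Circle.exp t) (Circle.exp y)) hπ
    (intervalIntegrable_dS1Slope t _ _) fun y hy => dS1_exp_exp_eq_add_integral ht hy
  rw [integral_smul_dS1Slope ht ((hv.mono Ico_subset_Icc_self).intervalIntegrable hπ), hg,
    exp_pi_eq_exp_neg_pi, sub_self, zero_sub, neg_sub] at byParts
  rw [fRep, sInt_eq_integral (integrable_dS1 _ _), VectorMeasure.integral_map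
    Circle.exp.continuous.measurable hcont.aestronglyMeasurable hint, byParts]

end HalfCircle

section LeftDerivativeOnCircle

variable {f : Circle → ℝ} {h' : ℝ → ℝ} {v : SignedMeasure ℝ}

lemma periodic_of_hasLeftDerivAtR_comp_exp
    (hh' : ∀ t, HasLeftDerivAtR (f ∘ Circle.exp) (h' t) t) : Function.Periodic h' (2 * π) :=
  HasLeftDerivAtR.periodic (Circle.periodic_exp.comp f) hh'

lemma integral_eq_sub_of_hasLeftDerivAtR_comp_exp (hf : Continuous f)
    (hh' : ∀ t, HasLeftDerivAtR (f ∘ Circle.exp) (h' t) t) {a b : ℝ}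
    (hint : IntervalIntegrable h' volume a b) :
    ∫ s in a..b, h' s = f (Circle.exp b) - f (Circle.exp a) :=
  integral_eq_sub_of_hasDerivWithinAt_Iio (hf.comp Circle.exp.continuous).continuousOn
    (fun x _ => hasLeftDerivAtR_iff_hasDerivWithinAt.1 (hh' x)) hint

lemma IsStieltjesOn.Icc_of_hasLeftDerivAtR_comp_exp {a b : ℝ} (hf : Continuous f)
    (hh' : ∀ t, HasLeftDerivAtR (f ∘ Circle.exp) (h' t) t) (hv : IsStieltjesOn v h' (Ico a b)) :
    IsStieltjesOn v h' (Icc a b) :=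
  hv.Icc_of_hasDerivWithinAt (hf.comp Circle.exp.continuous).continuousOn fun t _ =>
    hasLeftDerivAtR_iff_hasDerivWithinAt.1 (hh' t)

theorem fRep_map_exp_eq_two_mul_sub (hf : Continuous f)
    (hh' : ∀ t, HasLeftDerivAtR (f ∘ Circle.exp) (h' t) t)
    (hv : IsStieltjesOn v h' (Ico (-π) π)) (x : Circle) :
    fRep ((v.restrict (Ico (-π) π)).map Circle.exp) x = 2 * (f x - f (antipode x)) := by
  have hπ : -π ≤ π := by linarith [pi_pos]
  have hv' := hv.Icc_of_hasLeftDerivAtR_comp_exp hf hh'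
  have hper : h' π = h' (-π) := by
    rw [← periodic_of_hasLeftDerivAtR_comp_exp hh' (-π)]
    ring_nf
  have hint := hv.intervalIntegrable hπ
  have on_upper_half {t : ℝ} (ht : t ∈ Icc 0 π) :
      fRep ((v.restrict (Ico (-π) π)).map Circle.exp) (Circle.exp t) =
        2 * (f (Circle.exp t) - f (antipode (Circle.exp t))) := by
    have hsub : uIcc (t - π) t ⊆ uIcc (-π) π := by
      rw [uIcc_of_le (by linarith [pi_pos]), uIcc_of_le hπ]
      exact Icc_subset_Icc (by linarith [ht.1]) ht.2
    rw [fRep_map_exp hv' hper ht, integral_eq_sub_of_hasLeftDerivAtR_comp_exp hf hh' hint,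
      integral_eq_sub_of_hasLeftDerivAtR_comp_exp hf hh' (hint.mono_set hsub), exp_sub_pi,
      exp_pi_eq_exp_neg_pi, sub_self, sub_zero]
  have total_mass : (v.restrict (Ico (-π) π)).map Circle.exp univ = 0 := by
    rw [VectorMeasure.map_apply _ Circle.exp.continuous.measurable MeasurableSet.univ,
      preimage_univ, VectorMeasure.restrict_apply _ measurableSet_Ico MeasurableSet.univ,
      univ_inter, hv' _ (left_mem_Icc.2 hπ) _ (right_mem_Icc.2 hπ) hπ, hper, sub_self]
  obtain ⟨t, ht, rfl | rfl⟩ := exists_exp_eq_or_antipode_exp_eq x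
  · exact on_upper_half ht
  · rw [fRep_antipode total_mass, on_upper_half ht, antipode_antipode]
    ring

end LeftDerivativeOnCircle

theorem stmt12_general (C : ℝ) (f : Circle → ℝ)
    (hA : ∀ x : Circle, f x + f (antipode x) = π * C) (hf : Continuous f)
    (h' : ℝ → ℝ) (hh' : ∀ t : ℝ, HasLeftDerivAtR (f ∘ Circle.exp) (h' t) t)
    (lamStar : SignedMeasure ℝ)
    (hconc : ∀ A : Set ℝ, MeasurableSet A → lamStar A = lamStar (A ∩ Set.Ico (-π) π))
    (hStieltjes : ∀ s t : ℝ, -π ≤ s → s ≤ t → t < π →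
      lamStar (Set.Ico s t) = h' t - h' s) :
    (∀ t : ℝ, Tendsto h' (𝓝[<] t) (𝓝 (h' t))) ∧
    ∀ t : ℝ, fRep (lamStar.map Circle.exp) (Circle.exp t) = 2 * ∫ s in (t - π)..t, h' s ∧
      fRep (lamStar.map Circle.exp) (Circle.exp t) = 4 * f (Circle.exp t) - 2 * π * C := by
  have hv : IsStieltjesOn lamStar h' (Ico (-π) π) := fun s hs t ht hst =>
    hStieltjes s t hs.1 hst ht.2
  have hper := periodic_of_hasLeftDerivAtR_comp_exp hh'
  have restrict_eq : lamStar.restrict (Ico (-π) π) = lamStar :=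
    VectorMeasure.ext fun A hmeas => by
      rw [VectorMeasure.restrict_apply _ measurableSet_Ico hmeas, ← hconc A hmeas]
  have hperiod : -π + 2 * π = π := by ring
  refine ⟨continuousWithinAt_Iio_of_periodic (a := -π) hper two_pi_pos ?_, fun t => ?_⟩
  · rw [hperiod]
    exact fun t => (hv.Icc_of_hasLeftDerivAtR_comp_exp hf hh').continuousWithinAt_Iio
  · have hint : IntervalIntegrable h' volume (t - π) t :=
      hper.intervalIntegrable (t := -π) two_pi_pos.ne'
        (hperiod.symm ▸ hv.intervalIntegrable (by linarith [pi_pos])) _ _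
    have hrep := fRep_map_exp_eq_two_mul_sub hf hh' hv (Circle.exp t)
    rw [restrict_eq] at hrep
    rw [hrep, integral_eq_sub_of_hasLeftDerivAtR_comp_exp hf hh' hint, exp_sub_pi]
    exact ⟨rfl, by linear_combination -2 * hA (Circle.exp t)⟩

/-- Under (A) and (B), `∂₋h` is left-continuous for `h = f ∘ q`, and if
`λ*` is the Lebesgue–Stieltjes measure of `∂₋h` on `[-π, π)` and `λ = q_#λ*`, then for
every `t ∈ [0, π)`:
`∫ d(q(t), y) λ(dy) = 2·∫_{t-π}^{t} ∂₋h(s) ds = 4 f(q(t)) - 2πC`. -/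
theorem stmt12 (C : ℝ) (f : Circle → ℝ)
    (hA : ∀ x : Circle, f x + f (antipode x) = π * C)
    (hLip : LipschitzCircle f)
    (f' : Circle → ℝ) (hf' : ∀ x : Circle, HasLeftDerivCircleAt f (f' x) x)
    (hTV : circleTV f' ≠ ⊤)
    (h' : ℝ → ℝ) (hh' : ∀ t : ℝ, HasLeftDerivAtR (f ∘ Circle.exp) (h' t) t)
    (lamStar : SignedMeasure ℝ)
    (hconc : ∀ A : Set ℝ, MeasurableSet A → lamStar A = lamStar (A ∩ Set.Ico (-π) π))
    (hStieltjes : ∀ s t : ℝ, -π ≤ s → s ≤ t → t < π →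
      lamStar (Set.Ico s t) = h' t - h' s) :
    (∀ t : ℝ, Filter.Tendsto h' (nhdsWithin t (Set.Iio t)) (nhds (h' t))) ∧
    ∀ t ∈ Set.Ico (0 : ℝ) π,
      sInt (lamStar.map Circle.exp) (fun y => dS1 (Circle.exp t) y)
          = 2 * ∫ s in (t - π)..t, h' s ∧
      sInt (lamStar.map Circle.exp) (fun y => dS1 (Circle.exp t) y)
          = 4 * f (Circle.exp t) - 2 * π * C := by
  obtain ⟨hleft, hrep⟩ := stmt12_general C f hA hLip.continuous h' hh' lamStar hconc hStieltjes
  exact ⟨hleft, fun t _ => hrep t⟩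

end CirclePaper
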